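/- Let a, q, α, β, γ, δ ∈ ℝ with a > 1, set ε := α + β − γ − δ + 1, and let I be an open interval with I ⊆ (1, a). Suppose v : ℝ → ℝ is twice differentiable on J := {a(x−1)/(x−a) : x ∈ I} and satisfies Heun's differential equation with parameters (a, q − (β−δ)α, α, −β + γ + δ, δ, γ) at every point of J. Then u(x) := ((x−a)/(1−a))^{−α} · v(a(x−1)/(x−a)) satisfies Heun's differential equation with parameters (a, q, α, β, γ, δ) at every x ∈ I. -/

import Mathlib

/-- `y` satisfies Heun's differential equation with parameters `(a, q, α, β, γ, δ)`
(and `ε := α + β - γ - δ + 1`) at the point `x`. -/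
def SatisfiesHeun (a q α β γ δ : ℝ) (y : ℝ → ℝ) (x : ℝ) : Prop :=
  deriv (deriv y) x
    + (γ / x + δ / (x - 1) + (α + β - γ - δ + 1) / (x - a)) * deriv y x
    + (α * β * x - q) / (x * (x - 1) * (x - a)) * y x = 0

/-!
The involution `τ x = a (x - 1) / (x - a)` exchanges `0 ↔ 1` and `a ↔ ∞`, hence permutes the four
singular points of Heun's equation. Pulling a Heun operator back along `τ` gives an operator with
exponents `α, β'` at `a`, and multiplication by a power of `x - a` shifts one of them to `0`.
Concretely, with weight `w = ((x - a) / (1 - a)) ^ (-α)`, so that `w' / w = -α / (x - a)` and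
`w'' / w = α (α + 1) / (x - a) ^ 2`, comparing the coefficients of `v''`, `v'` and `v` shows that
the Heun operator applied to `w · (v ∘ τ)` is `w τ' ^ 2` times the transformed Heun operator applied
to `v`, evaluated at `τ x`.
-/

open Filter Topology

section WeightedComposition

variable {𝕜 F : Type*} [NontriviallyNormedField 𝕜] [NormedAddCommGroup F] [NormedSpace 𝕜 F]
  {w w' τ τ' : 𝕜 → 𝕜} {v : 𝕜 → F} {w₁ w₂ τ₁ τ₂ x : 𝕜}

theorem hasDerivAt_smul_comp (hw : HasDerivAt w w₁ x) (hτ : HasDerivAt τ τ₁ x)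
    (hv : DifferentiableAt 𝕜 v (τ x)) :
    HasDerivAt (fun y => w y • v (τ y)) (w₁ • v (τ x) + (w x * τ₁) • deriv v (τ x)) x := by
  refine (hw.smul (hv.hasDerivAt.scomp x hτ)).congr_deriv ?_
  simp only [Function.comp_apply]
  module

theorem deriv_deriv_smul_comp
    (hw : ∀ᶠ y in 𝓝 x, HasDerivAt w (w' y) y) (hw' : HasDerivAt w' w₂ x)
    (hτ : ∀ᶠ y in 𝓝 x, HasDerivAt τ (τ' y) y) (hτ' : HasDerivAt τ' τ₂ x)
    (hv : ∀ᶠ y in 𝓝 x, DifferentiableAt 𝕜 v (τ y)) (hv' : DifferentiableAt 𝕜 (deriv v) (τ x)) :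
    deriv (deriv fun y => w y • v (τ y)) x =
      w₂ • v (τ x) + (2 * w' x * τ' x + w x * τ₂) • deriv v (τ x)
        + (w x * τ' x ^ 2) • deriv (deriv v) (τ x) := by
  have hfirst : deriv (fun y => w y • v (τ y)) =ᶠ[𝓝 x]
      fun y => w' y • v (τ y) + (w y * τ' y) • deriv v (τ y) := by
    filter_upwards [hw, hτ, hv] with y hwy hτy hvy using (hasDerivAt_smul_comp hwy hτy hvy).deriv
  have hτx := hτ.self_of_nhds
  have hsecond := (hasDerivAt_smul_comp hw' hτx hv.self_of_nhds).fun_add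
    (hasDerivAt_smul_comp (hw.self_of_nhds.fun_mul hτ') hτx hv')
  rw [hfirst.deriv_eq, hsecond.deriv]
  module

end WeightedComposition

section ShiftedPowers

variable {a c p x : ℝ}

theorem hasDerivAt_sub_div_rpow (hc : c ≠ 0) (hx : x ≠ a) :
    HasDerivAt (fun y => ((y - a) / c) ^ p) (p / (x - a) * ((x - a) / c) ^ p) x := by
  have hxa : x - a ≠ 0 := sub_ne_zero.2 hx
  have hbase : (x - a) / c ≠ 0 := div_ne_zero hxa hc
  refine ((((hasDerivAt_id' x).sub_const a).div_const c).rpow_const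
    (.inl hbase)).congr_deriv ?_
  rw [Real.rpow_sub_one hbase]
  field_simp

theorem hasDerivAt_div_mul_sub_div_rpow (hc : c ≠ 0) (hx : x ≠ a) :
    HasDerivAt (fun y => p / (y - a) * ((y - a) / c) ^ p)
      (p * (p - 1) / (x - a) ^ 2 * ((x - a) / c) ^ p) x := by
  have hxa : x - a ≠ 0 := sub_ne_zero.2 hx
  refine (((hasDerivAt_const x p).div ((hasDerivAt_id' x).sub_const a) hxa).mul
    (hasDerivAt_sub_div_rpow hc hx)).congr_deriv ?_
  simp only [Pi.div_apply]
  field_simp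
  ring

theorem hasDerivAt_const_div_sub_sq (hx : x ≠ a) :
    HasDerivAt (fun y => c / (y - a) ^ 2) (-2 / (x - a) * (c / (x - a) ^ 2)) x := by
  have hxa : x - a ≠ 0 := sub_ne_zero.2 hx
  refine ((hasDerivAt_const x c).div (((hasDerivAt_id' x).sub_const a).fun_pow 2)
    (pow_ne_zero 2 hxa)).congr_deriv ?_
  field_simp
  ring

end ShiftedPowers

/-- The Möbius involution `x ↦ a (x - 1) / (x - a)` of the projective line, which exchanges the
singular points `0 ↔ 1` and `a ↔ ∞` of Heun's equation. On `ℝ`, division by zero gives it the junk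
value `0` at `a`. -/
noncomputable def heunInvolution (a x : ℝ) : ℝ := a * (x - 1) / (x - a)

/-- The coefficient of `y'` in Heun's equation, with `ε` eliminated. -/
noncomputable def heunFirstCoeff (a α β γ δ x : ℝ) : ℝ :=
  γ / x + δ / (x - 1) + (α + β - γ - δ + 1) / (x - a)

/-- The coefficient of `y` in Heun's equation. -/
noncomputable def heunZerothCoeff (a q α β x : ℝ) : ℝ :=
  (α * β * x - q) / (x * (x - 1) * (x - a))

/-- Heun's differential operator, the left-hand side of Heun's equation for `y` at `x`. -/
noncomputable def heunOperator (a q α β γ δ : ℝ) (y : ℝ → ℝ) (x : ℝ) : ℝ :=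
  deriv (deriv y) x + heunFirstCoeff a α β γ δ x * deriv y x + heunZerothCoeff a q α β x * y x

theorem satisfiesHeun_iff_heunOperator_eq_zero {a q α β γ δ : ℝ} {y : ℝ → ℝ} {x : ℝ} :
    SatisfiesHeun a q α β γ δ y x ↔ heunOperator a q α β γ δ y x = 0 :=
  Iff.rfl

section Involution

variable {a c q α β γ δ x : ℝ} {v : ℝ → ℝ}

theorem heunInvolution_sub_one (hx : x ≠ a) :
    heunInvolution a x - 1 = (a - 1) * x / (x - a) := by
  have hxa : x - a ≠ 0 := sub_ne_zero.2 hx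
  unfold heunInvolution
  field_simp
  ring

theorem heunInvolution_sub_self (hx : x ≠ a) :
    heunInvolution a x - a = a * (a - 1) / (x - a) := by
  have hxa : x - a ≠ 0 := sub_ne_zero.2 hx
  unfold heunInvolution
  field_simp
  ring

theorem hasDerivAt_heunInvolution (hx : x ≠ a) :
    HasDerivAt (heunInvolution a) (a * (1 - a) / (x - a) ^ 2) x := by
  have hxa : x - a ≠ 0 := sub_ne_zero.2 hx
  refine ((((hasDerivAt_id' x).sub_const 1).const_mul a).div
    ((hasDerivAt_id' x).sub_const a) hxa).congr_deriv ?_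
  field_simp
  ring

-- The two correction terms are `2 w' / w` and `τ'' / τ'`.
theorem heunFirstCoeff_heunInvolution_mul (ha₀ : a ≠ 0) (ha₁ : a ≠ 1)
    (hx₀ : x ≠ 0) (hx₁ : x ≠ 1) (hxa : x ≠ a) :
    heunFirstCoeff a α (-β + γ + δ) δ γ (heunInvolution a x) * (a * (1 - a) / (x - a) ^ 2) =
      heunFirstCoeff a α β γ δ x + 2 * (-α / (x - a)) + -2 / (x - a) := by
  have ha₁' : a - 1 ≠ 0 := sub_ne_zero.2 ha₁
  have hx₁' : x - 1 ≠ 0 := sub_ne_zero.2 hx₁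
  have hxa' : x - a ≠ 0 := sub_ne_zero.2 hxa
  rw [heunFirstCoeff, heunFirstCoeff, heunInvolution_sub_one hxa, heunInvolution_sub_self hxa,
    heunInvolution, ← neg_sub a 1]
  field_simp
  ring

-- The two correction terms come from `w' / w` and `w'' / w`.
theorem heunZerothCoeff_heunInvolution_mul (ha₀ : a ≠ 0) (ha₁ : a ≠ 1)
    (hx₀ : x ≠ 0) (hx₁ : x ≠ 1) (hxa : x ≠ a) :
    heunZerothCoeff a (q - (β - δ) * α) α (-β + γ + δ) (heunInvolution a x) *
        (a * (1 - a) / (x - a) ^ 2) ^ 2 =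
      heunZerothCoeff a q α β x + heunFirstCoeff a α β γ δ x * (-α / (x - a))
        + -α * (-α - 1) / (x - a) ^ 2 := by
  have ha₁' : a - 1 ≠ 0 := sub_ne_zero.2 ha₁
  have hx₁' : x - 1 ≠ 0 := sub_ne_zero.2 hx₁
  have hxa' : x - a ≠ 0 := sub_ne_zero.2 hxa
  rw [heunZerothCoeff, heunZerothCoeff, heunFirstCoeff, heunInvolution_sub_one hxa,
    heunInvolution_sub_self hxa, heunInvolution, ← neg_sub a 1]
  field_simp
  ring

theorem heunOperator_rpow_mul_comp_heunInvolution (ha₀ : a ≠ 0) (ha₁ : a ≠ 1) (hc : c ≠ 0)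
    (hx₀ : x ≠ 0) (hx₁ : x ≠ 1) (hxa : x ≠ a)
    (hv : ∀ᶠ y in 𝓝 x, DifferentiableAt ℝ v (heunInvolution a y))
    (hv' : DifferentiableAt ℝ (deriv v) (heunInvolution a x)) :
    heunOperator a q α β γ δ (fun y => ((y - a) / c) ^ (-α) * v (heunInvolution a y)) x =
      ((x - a) / c) ^ (-α) * (a * (1 - a) / (x - a) ^ 2) ^ 2 *
        heunOperator a (q - (β - δ) * α) α (-β + γ + δ) δ γ v (heunInvolution a x) := by
  have hw : ∀ᶠ y in 𝓝 x, HasDerivAt (fun y => ((y - a) / c) ^ (-α))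
      (-α / (y - a) * ((y - a) / c) ^ (-α)) y :=
    (eventually_ne_nhds hxa).mono fun y hy => hasDerivAt_sub_div_rpow hc hy
  have hτ : ∀ᶠ y in 𝓝 x, HasDerivAt (heunInvolution a) (a * (1 - a) / (y - a) ^ 2) y :=
    (eventually_ne_nhds hxa).mono fun y hy => hasDerivAt_heunInvolution hy
  have hfirst := (hasDerivAt_smul_comp hw.self_of_nhds hτ.self_of_nhds hv.self_of_nhds).deriv
  have hsecond := deriv_deriv_smul_comp hw (hasDerivAt_div_mul_sub_div_rpow hc hxa)
    hτ (hasDerivAt_const_div_sub_sq hxa) hv hv'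
  simp only [smul_eq_mul] at hfirst hsecond
  have hfirstCoeff := heunFirstCoeff_heunInvolution_mul (α := α) (β := β) (γ := γ) (δ := δ)
    ha₀ ha₁ hx₀ hx₁ hxa
  have hzerothCoeff := heunZerothCoeff_heunInvolution_mul (q := q) (α := α) (β := β) (γ := γ)
    (δ := δ) ha₀ ha₁ hx₀ hx₁ hxa
  rw [heunOperator, heunOperator, hfirst, hsecond]
  linear_combination
    -(((x - a) / c) ^ (-α) * (a * (1 - a) / (x - a) ^ 2) * deriv v (heunInvolution a x)) *
        hfirstCoeff
      - ((x - a) / c) ^ (-α) * v (heunInvolution a x) * hzerothCoeff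

end Involution

theorem heun_transform_pow_neg_alpha_comp_a_mul_x_sub_one_over_x_sub_a_general
    {a q α β γ δ x : ℝ} {v : ℝ → ℝ} (ha : a ≠ 0) (hx₀ : x ≠ 0) (hx₁ : x ≠ 1)
    (hpos : 0 < (x - a) / (1 - a))
    (hv : ∀ᶠ y in 𝓝 x, DifferentiableAt ℝ v (a * (y - 1) / (y - a)))
    (hv' : DifferentiableAt ℝ (deriv v) (a * (x - 1) / (x - a))) :
    SatisfiesHeun a q α β γ δ
        (fun y => ((y - a) / (1 - a)) ^ (-α) * v (a * (y - 1) / (y - a))) x ↔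
      SatisfiesHeun a (q - (β - δ) * α) α (-β + γ + δ) δ γ v (a * (x - 1) / (x - a)) := by
  obtain ⟨hxa, h1a⟩ := div_ne_zero_iff.1 hpos.ne'
  have hτ' : a * (1 - a) / (x - a) ^ 2 ≠ 0 := div_ne_zero (mul_ne_zero ha h1a) (pow_ne_zero 2 hxa)
  have hfactor := mul_ne_zero (Real.rpow_pos_of_pos hpos (-α)).ne' (pow_ne_zero 2 hτ')
  have hoperator := heunOperator_rpow_mul_comp_heunInvolution (q := q) (α := α) (β := β) (γ := γ)
    (δ := δ) ha (sub_ne_zero.1 h1a).symm h1a hx₀ hx₁ (sub_ne_zero.1 hxa) hv hv'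
  rw [satisfiesHeun_iff_heunOperator_eq_zero, satisfiesHeun_iff_heunOperator_eq_zero]
  exact (Eq.congr_left hoperator).trans (mul_eq_zero_iff_left hfactor)

theorem heun_transform_pow_neg_alpha_comp_a_mul_x_sub_one_over_x_sub_a
    (a q α β γ δ : ℝ) (ha : 1 < a)
    (l u : ℝ) (hsub : Set.Ioo l u ⊆ Set.Ioo 1 a)
    (v : ℝ → ℝ)
    (hv : ∀ t ∈ (fun x : ℝ => a * (x - 1) / (x - a)) '' Set.Ioo l u,
      DifferentiableAt ℝ v t ∧ DifferentiableAt ℝ (deriv v) t)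
    (hveq : ∀ t ∈ (fun x : ℝ => a * (x - 1) / (x - a)) '' Set.Ioo l u,
      SatisfiesHeun a (q - (β - δ) * α) α (-β + γ + δ) δ γ v t) :
    ∀ x ∈ Set.Ioo l u,
      SatisfiesHeun a q α β γ δ
        (fun x => ((x - a) / (1 - a)) ^ (-α) * v (a * (x - 1) / (x - a))) x := by
  intro x hx
  obtain ⟨h1x, hxa⟩ := hsub hx
  have ha₀ : 0 < a := zero_lt_one.trans ha
  have hx₀ : 0 < x := zero_lt_one.trans h1x
  have hpos : 0 < (x - a) / (1 - a) := div_pos_of_neg_of_neg (sub_neg.2 hxa) (sub_neg.2 ha)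
  have hdiff : ∀ᶠ y in 𝓝 x, DifferentiableAt ℝ v (a * (y - 1) / (y - a)) := by
    filter_upwards [isOpen_Ioo.mem_nhds hx] with y hy using (hv _ ⟨y, hy, rfl⟩).1
  exact (heun_transform_pow_neg_alpha_comp_a_mul_x_sub_one_over_x_sub_a_general ha₀.ne'
    hx₀.ne' h1x.ne' hpos hdiff (hv _ ⟨x, hx, rfl⟩).2).2 (hveq _ ⟨x, hx, rfl⟩)
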